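/- Let σ be a decorated permutation of {1,…,n} all of whose schedule numbers equal 1, and let σ_k,…,σ_ℓ be a left-maximal cyclic run such that σ_ℓ is undecorated. Then σ_k is undecorated as well, and σ_{k+1},…,σ_{ℓ−1} are all decorated. -/

import Mathlib

/-!
A cyclic run is either decreasing or consists of two decreasing pieces separated by one
ascent, with its first entry smaller than its last (`IsCyclicRun.cases`). Consequently the schedule
number of an undecorated entry `σ_i` counts the undecorated entries other than `σ_i` of the longest
cyclic run ending at `i`, and the schedule number of a decorated entry `σ_i` counts those of the
longest cyclic run starting at `i`.

Suppose all schedule numbers are `1`, and let `σ_k,…,σ_ℓ` be left-maximal with `σ_ℓ` undecorated.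
Then exactly one of `σ_k,…,σ_{ℓ-1}` is undecorated (`exists_undec_left`, `undec_left_unique`).
If `σ_k` were decorated, this entry and `σ_ℓ` would both be counted by the schedule number of
`σ_k`, which would be at least `2` (`undec_right_unique`). So the undecorated entry is `σ_k`.
-/

open Finset

namespace QEuler

/-! ### Entries of a permutation of `{1,…,n}`, with the convention `σ₀ = 0`.
A permutation `σ ∈ S_n` is represented by `Equiv.Perm (Fin n)`; its entry at
position `i ∈ {1,…,n}` is `(σ (i-1)).val + 1 ∈ {1,…,n}`, and all other
positions (in particular position `0`) carry the value `0`. -/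

def ent {n : ℕ} (σ : Equiv.Perm (Fin n)) (i : ℕ) : ℕ :=
  if h : 1 ≤ i ∧ i ≤ n then ((σ ⟨i - 1, by omega⟩ : Fin n) : ℕ) + 1 else 0

/-- Decorations: a set `D : Finset (Fin n)` records the decorated positions,
`j : Fin n` encoding position `j+1 ∈ {1,…,n}`.  `isDec D i` tells whether
position `i` is decorated (position `0` never is). -/
def isDec {n : ℕ} (D : Finset (Fin n)) (i : ℕ) : Bool :=
  if h : 1 ≤ i ∧ i ≤ n then decide ((⟨i - 1, by omega⟩ : Fin n) ∈ D) else false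

/-- Number of decorated positions among `{1,…,n}` for a decoration predicate. -/
def decCount (n : ℕ) (D : ℕ → Bool) : ℕ :=
  ((Finset.Icc 1 n).filter fun i => D i = true).card

/-! ### Major index and reverse major index -/

/-- Major index of the word `E 1, E 2, …, E n`. -/
def maj (n : ℕ) (E : ℕ → ℕ) : ℕ :=
  ∑ i ∈ Finset.Icc 1 (n - 1), if E (i + 1) < E i then i else 0

/-- Reverse major index: the major index of the reversed word `E n, …, E 1`. -/
def revmaj (n : ℕ) (E : ℕ → ℕ) : ℕ := maj n fun i => E (n + 1 - i)

/-! ### Decreasing runs and schedule numbers -/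

/-- The word is strictly decreasing along consecutive positions `p,…,q`. -/
def decOn (E : ℕ → ℕ) (p q : ℕ) : Prop := ∀ t ∈ Finset.Ico p q, E (t + 1) < E t

instance (E : ℕ → ℕ) (p q : ℕ) : Decidable (decOn E p q) := by
  unfold decOn; infer_instance

/-- Start of the maximal strictly decreasing consecutive run containing position `i`. -/
def runStart (E : ℕ → ℕ) (i : ℕ) : ℕ :=
  Nat.find (show ∃ p, decOn E p i from ⟨i, fun t ht => absurd ht (by simp)⟩)

/-- End of the maximal strictly decreasing consecutive run containing position `i`
(positions are `0,…,n`). -/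
def runEnd (n : ℕ) (E : ℕ → ℕ) (i : ℕ) : ℕ :=
  Nat.findGreatest (fun q => decOn E i q) n

/-- The schedule number of a decorated permutation (given by its entry word `E` on
positions `0,…,n`, with `E 0 = 0`, and decoration predicate `D`) at position `i`.
If `σ_i` is undecorated and lies in run `r_j` it counts the undecorated entries of `r_j`
larger than `σ_i` plus the undecorated entries of `r_{j-1}` smaller than `σ_i`;
if `σ_i` is decorated it counts the undecorated entries of `r_j` smaller than `σ_i`
plus the undecorated entries of `r_{j+1}` larger than `σ_i`. -/
def schedNum (n : ℕ) (E : ℕ → ℕ) (D : ℕ → Bool) (i : ℕ) : ℕ :=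
  if D i = true then
    ((Finset.Icc (runStart E i) (runEnd n E i)).filter fun t => D t = false ∧ E t < E i).card
      + (if runEnd n E i < n then
          ((Finset.Icc (runEnd n E i + 1) (runEnd n E (runEnd n E i + 1))).filter
            fun t => D t = false ∧ E i < E t).card
        else 0)
  else
    ((Finset.Icc (runStart E i) (runEnd n E i)).filter fun t => D t = false ∧ E i < E t).card
      + (if runStart E i = 0 then 0 else
          ((Finset.Icc (runStart E (runStart E i - 1)) (runStart E i - 1)).filter
            fun t => D t = false ∧ E t < E i).card)

/-! ### Cyclic runs -/

/-- `σ_i,…,σ_j` is a cyclic (decreasing) run: for some shift `k`, the residues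
`σ_t + k (mod n+1)` are strictly decreasing for `t = i,…,j`. -/
def IsCyclicRun (n : ℕ) (E : ℕ → ℕ) (i j : ℕ) : Prop :=
  i ≤ j ∧ j ≤ n ∧ ∃ k : ℕ, ∀ t ∈ Finset.Ico i j, (E (t + 1) + k) % (n + 1) < (E t + k) % (n + 1)

/-- A cyclic run which cannot be extended to the left. -/
def LeftMaximalRun (n : ℕ) (E : ℕ → ℕ) (i j : ℕ) : Prop :=
  IsCyclicRun n E i j ∧ (i = 0 ∨ ¬ IsCyclicRun n E (i - 1) j)

/-- A cyclic run which cannot be extended to the right. -/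
def RightMaximalRun (n : ℕ) (E : ℕ → ℕ) (i j : ℕ) : Prop :=
  IsCyclicRun n E i j ∧ (j = n ∨ ¬ IsCyclicRun n E i (j + 1))

/-! ### Double ascents, descents, peaks, valleys; `inv3` and `monot` -/

def DblAsc (E : ℕ → ℕ) (j : ℕ) : Prop := E (j - 2) < E (j - 1) ∧ E (j - 1) < E j
def DblDesc (E : ℕ → ℕ) (j : ℕ) : Prop := E (j - 1) < E (j - 2) ∧ E j < E (j - 1)
def IsPeak (E : ℕ → ℕ) (j : ℕ) : Prop := E (j - 2) < E (j - 1) ∧ E j < E (j - 1)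
def IsValley (E : ℕ → ℕ) (j : ℕ) : Prop := E (j - 1) < E (j - 2) ∧ E (j - 1) < E j

instance (E : ℕ → ℕ) (j : ℕ) : Decidable (DblAsc E j) := by unfold DblAsc; infer_instance
instance (E : ℕ → ℕ) (j : ℕ) : Decidable (DblDesc E j) := by unfold DblDesc; infer_instance
instance (E : ℕ → ℕ) (j : ℕ) : Decidable (IsPeak E j) := by unfold IsPeak; infer_instance
instance (E : ℕ → ℕ) (j : ℕ) : Decidable (IsValley E j) := by unfold IsValley; infer_instance

/-- `(i,j)` is a 3-inversion. -/
def Inv3Pair (E : ℕ → ℕ) (i j : ℕ) : Prop :=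
  (DblAsc E j ∧ E (j - 1) < E i ∧ E i < E j) ∨
  (DblDesc E j ∧ E j < E i ∧ E i < E (j - 1)) ∨
  (IsPeak E j ∧ E j < E i) ∨
  (IsValley E j ∧ E i < E j)

instance (E : ℕ → ℕ) (i j : ℕ) : Decidable (Inv3Pair E i j) := by
  unfold Inv3Pair; infer_instance

/-- Number of 3-inversions of the word `E 1, …, E n` (with the convention `E 0 = 0`). -/
def inv3 (n : ℕ) (E : ℕ → ℕ) : ℕ :=
  ((Finset.Icc 1 n ×ˢ Finset.Icc 1 n).filter fun p => p.1 < p.2 ∧ Inv3Pair E p.1 p.2).card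

/-- Number of double ascents and double descents. -/
def monot (n : ℕ) (E : ℕ → ℕ) : ℕ :=
  ((Finset.Icc 2 n).filter fun j => DblAsc E j ∨ DblDesc E j).card

/-! ### Alternating permutations, `31-2` patterns and Chebikin's statistic -/

/-- `σ₁ > σ₂ < σ₃ > ⋯`. -/
def IsAlternating (n : ℕ) (E : ℕ → ℕ) : Prop :=
  ∀ i ∈ Finset.Icc 1 (n - 1), if Odd i then E (i + 1) < E i else E i < E (i + 1)

instance (n : ℕ) (E : ℕ → ℕ) : Decidable (IsAlternating n E) := by
  unfold IsAlternating; infer_instance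

/-- The finset of alternating permutations of `{1,…,n}`. -/
def altPerms (n : ℕ) : Finset (Equiv.Perm (Fin n)) :=
  Finset.univ.filter fun σ => IsAlternating n (ent σ)

/-- Number of `31-2` patterns: pairs `(i,j)` with `i+1 < j ≤ n` and `σ_j > σ_i > σ_{i+1}`. -/
def pat312 (n : ℕ) (E : ℕ → ℕ) : ℕ :=
  ((Finset.Icc 1 n ×ˢ Finset.Icc 1 n).filter fun p =>
    p.1 + 1 < p.2 ∧ E (p.1 + 1) < E p.1 ∧ E p.1 < E p.2).card

/-- Chebikin's alternating inversion statistic `î`. -/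
def chebi (n : ℕ) (E : ℕ → ℕ) : ℕ :=
  ∑ i ∈ Finset.Icc 1 (n - 1),
    ((Finset.Icc (i + 1) n).filter fun j => if Odd i then E j < E i else E i < E j).card

/-! ### Insertion `η_l`, structural attribute `ã`, the shift `k + τ` and `δ_k` -/

/-- The entry word of the insertion `η_l(σ) ∈ S_{n+1}` of the value `l` at the end of `σ ∈ S_n`. -/
def etaEnt (n l : ℕ) (E : ℕ → ℕ) (i : ℕ) : ℕ :=
  if i = n + 1 then l
  else if 1 ≤ i ∧ i ≤ n then (if l ≤ E i then E i + 1 else E i) else 0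

/-- Structural attribute `ã(σ)` of `σ ∈ S_n`. -/
def atil (n : ℕ) (E : ℕ → ℕ) : ℕ :=
  if E (n - 1) < E n then n + 1 - E n else E n

/-- The entry word of `k + τ ∈ S_{n+1}` for `τ ∈ S_n`:
`σ₀ = 0` and `σ_{i+1}` is the representative of `k + τ_i (mod n+1)` in `{1,…,n+1}`. -/
def shiftEnt (n k : ℕ) (E : ℕ → ℕ) (i : ℕ) : ℕ :=
  if i = 0 then 0
  else if (k + E (i - 1)) % (n + 1) = 0 then n + 1 else (k + E (i - 1)) % (n + 1)

/-- Position of the first (leftmost, among `1,…,n`) undecorated letter;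
equals `n+1` if every position is decorated. -/
def firstUndecPos (n : ℕ) (D : ℕ → Bool) : ℕ :=
  Nat.find (show ∃ i, n < i ∨ (1 ≤ i ∧ D i = false) from ⟨n + 1, Or.inl (by omega)⟩)

/-- `a(τ)`: the value of the first undecorated letter of `τ`. -/
def aVal (n : ℕ) (E : ℕ → ℕ) (D : ℕ → Bool) : ℕ := E (firstUndecPos n D)

/-- Decorations of the `k`-th descendant `δ_k(τ)`: position `1` is decorated iff
`k > n+1-a(τ)`, and for `i ≥ 2` position `i` is decorated iff position `i-1` of `τ` is. -/
def deltaDec (n k : ℕ) (D : ℕ → Bool) (aval : ℕ) (i : ℕ) : Bool :=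
  if i = 0 then false
  else if i = 1 then decide (n + 1 - aval < k)
  else D (i - 1)

/-! ### Valley-decorated standardly labelled Dyck paths

A path of size `n` is encoded by its area word `a : Fin n → Fin n`
(`a i` = number of whole squares between the `(i+1)`-st north step and the diagonal;
a word `a₁ ⋯ a_n` is the area word of a Dyck path iff `a₁ = 0` and `a_i ≤ a_{i-1} + 1`),
its labelling `w : Equiv.Perm (Fin n)`, and its decoration set `dv : Finset (Fin n)`
(`j` encoding the position `j+1`). -/

abbrev PathData (n : ℕ) := (Fin n → Fin n) × Equiv.Perm (Fin n) × Finset (Fin n)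

/-- The area word, on positions `1,…,n`. -/
def aw {n : ℕ} (P : PathData n) (i : ℕ) : ℕ :=
  if h : 1 ≤ i ∧ i ≤ n then ((P.1 ⟨i - 1, by omega⟩ : Fin n) : ℕ) else 0

/-- The labels, on positions `1,…,n`. -/
def lbl {n : ℕ} (P : PathData n) (i : ℕ) : ℕ := ent P.2.1 i

/-- Whether the `i`-th north step is decorated. -/
def pdec {n : ℕ} (P : PathData n) (i : ℕ) : Bool := isDec P.2.2 i

/-- The `i`-th north step is a contractible valley: `a_{i-1} > a_i`, or
`a_{i-1} = a_i` and `w_{i-1} < w_i`. -/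
def ContractibleValley {n : ℕ} (P : PathData n) (i : ℕ) : Prop :=
  2 ≤ i ∧ i ≤ n ∧ (aw P i < aw P (i - 1) ∨ (aw P (i - 1) = aw P i ∧ lbl P (i - 1) < lbl P i))

instance {n : ℕ} (P : PathData n) (i : ℕ) : Decidable (ContractibleValley P i) := by
  unfold ContractibleValley; infer_instance

/-- `P` encodes a genuine valley-decorated standardly labelled Dyck path:
the area word is valid, labels in a common column increase from bottom to top
(equivalently, consecutive north steps carry increasing labels), and every
decoration sits on a contractible valley. -/
def IsValidPath {n : ℕ} (P : PathData n) : Prop :=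
  (1 ≤ n → aw P 1 = 0) ∧
  (∀ i ∈ Finset.Icc 2 n, aw P i ≤ aw P (i - 1) + 1) ∧
  (∀ i ∈ Finset.Icc 2 n, aw P i = aw P (i - 1) + 1 → lbl P (i - 1) < lbl P i) ∧
  (∀ i ∈ Finset.Icc 1 n, pdec P i = true → ContractibleValley P i)

instance {n : ℕ} (P : PathData n) : Decidable (IsValidPath P) := by
  unfold IsValidPath; infer_instance

/-- The finset `stLD(n)^{•k}` of valley-decorated standardly labelled Dyck paths
of size `n` with exactly `k` decorated (contractible) valleys. -/
def stLD (n k : ℕ) : Finset (PathData n) :=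
  Finset.univ.filter fun P => IsValidPath P ∧ P.2.2.card = k

/-- The area statistic. -/
def area {n : ℕ} (P : PathData n) : ℕ := ∑ i ∈ Finset.Icc 1 n, aw P i

/-- `(i,j)` is a primary diagonal inversion. -/
def PrimaryDinv {n : ℕ} (P : PathData n) (i j : ℕ) : Prop :=
  aw P i = aw P j ∧ lbl P i < lbl P j ∧ pdec P i = false

/-- `(i,j)` is a secondary diagonal inversion. -/
def SecondaryDinv {n : ℕ} (P : PathData n) (i j : ℕ) : Prop :=
  aw P i = aw P j + 1 ∧ lbl P j < lbl P i ∧ pdec P i = false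

instance {n : ℕ} (P : PathData n) (i j : ℕ) : Decidable (PrimaryDinv P i j) := by
  unfold PrimaryDinv; infer_instance
instance {n : ℕ} (P : PathData n) (i j : ℕ) : Decidable (SecondaryDinv P i j) := by
  unfold SecondaryDinv; infer_instance

/-- The set of diagonal-inversion pairs `(i,j)`, `1 ≤ i < j ≤ n`. -/
def dinvPairs {n : ℕ} (P : PathData n) : Finset (ℕ × ℕ) :=
  (Finset.Icc 1 n ×ˢ Finset.Icc 1 n).filter fun p =>
    p.1 < p.2 ∧ (PrimaryDinv P p.1 p.2 ∨ SecondaryDinv P p.1 p.2)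

/-- `dinv(P)`: number of primary and secondary diagonal inversions minus the
number of decorated valleys (a nonnegative quantity). -/
def dinv {n : ℕ} (P : PathData n) : ℕ := (dinvPairs P).card - P.2.2.card

/-! ### The diagonal word of a path -/

/-- Position in the diagonal word of the label of the `i`-th north step:
labels are listed diagonal by diagonal, and within a diagonal in decreasing order. -/
def dwPos {n : ℕ} (P : PathData n) (i : ℕ) : ℕ :=
  ((Finset.Icc 1 n).filter fun i' =>
    aw P i' < aw P i ∨ (aw P i' = aw P i ∧ lbl P i ≤ lbl P i')).card

/-- The `j`-th letter of the diagonal word `dw(P)`. -/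
def dwEnt {n : ℕ} (P : PathData n) (j : ℕ) : ℕ :=
  ∑ i ∈ (Finset.Icc 1 n).filter (fun i => dwPos P i = j), lbl P i

/-- Whether the `j`-th letter of the diagonal word is decorated. -/
def dwDec {n : ℕ} (P : PathData n) (j : ℕ) : Bool :=
  decide (((Finset.Icc 1 n).filter fun i => dwPos P i = j ∧ pdec P i = true).Nonempty)

end QEuler

namespace QEuler

/-- All schedule numbers of the decorated permutation equal `1`. -/
def HasSchedOne (n : ℕ) (E : ℕ → ℕ) (D : ℕ → Bool) : Prop :=
  ∀ i ∈ Finset.Icc 1 n, schedNum n E D i = 1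

instance (n : ℕ) (E : ℕ → ℕ) (D : ℕ → Bool) : Decidable (HasSchedOne n E D) := by
  unfold HasSchedOne; infer_instance

/-- The diagonal word of `P` is the decorated permutation `(σ, D)`. -/
def DwEq {n : ℕ} (P : PathData n) (σ : Equiv.Perm (Fin n)) (D : Finset (Fin n)) : Prop :=
  (∀ j ∈ Finset.Icc 1 n, dwEnt P j = ent σ j) ∧ ∀ j ∈ Finset.Icc 1 n, dwDec P j = isDec D j

instance {n : ℕ} (P : PathData n) (σ : Equiv.Perm (Fin n)) (D : Finset (Fin n)) :
    Decidable (DwEq P σ D) := by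
  unfold DwEq; infer_instance

end QEuler

open QEuler

namespace QEuler

variable {n : ℕ} {E : ℕ → ℕ} {D : ℕ → Bool}

/-! ### Decreasing runs -/

lemma decOn.mono {p q p' q' : ℕ} (h : decOn E p q) (hp : p ≤ p') (hq : q' ≤ q) :
    decOn E p' q' := by
  intro t ht
  simp only [Finset.mem_Ico] at ht
  exact h t (by simp only [Finset.mem_Ico]; omega)

lemma decOn.le {p q : ℕ} (h : decOn E p q) (hpq : p ≤ q) : E q ≤ E p := by
  induction q, hpq using Nat.le_induction with
  | base => exact le_rfl
  | succ q hq ih =>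
    have h1 := ih (h.mono le_rfl (Nat.le_succ q))
    have h2 := h q (by simp only [Finset.mem_Ico]; omega)
    omega

lemma decOn.lt {p q : ℕ} (h : decOn E p q) (hpq : p < q) : E q < E p := by
  have h1 := h p (by simp only [Finset.mem_Ico]; omega)
  have h2 := (h.mono (show p ≤ p + 1 by omega) le_rfl).le (show p + 1 ≤ q by omega)
  omega

lemma decOn_runStart (E : ℕ → ℕ) (i : ℕ) : decOn E (runStart E i) i :=
  Nat.find_spec (p := fun p => decOn E p i) _

lemma runStart_le {p i : ℕ} (h : decOn E p i) : runStart E i ≤ p :=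
  Nat.find_min' _ h

lemma runStart_le_self (E : ℕ → ℕ) (i : ℕ) : runStart E i ≤ i :=
  runStart_le fun t ht => absurd ht (by simp)

lemma decOn_runEnd {i : ℕ} (hi : i ≤ n) : decOn E i (runEnd n E i) :=
  Nat.findGreatest_spec (P := fun q => decOn E i q) hi fun t ht => absurd ht (by simp)

lemma le_runEnd {i q : ℕ} (hq : q ≤ n) (h : decOn E i q) : q ≤ runEnd n E i :=
  Nat.le_findGreatest hq h

lemma self_le_runEnd {i : ℕ} (hi : i ≤ n) : i ≤ runEnd n E i :=
  le_runEnd hi fun t ht => absurd ht (by simp)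

lemma runEnd_le (i : ℕ) : runEnd n E i ≤ n := Nat.findGreatest_le n

lemma runStart_eq {m i : ℕ} (h : decOn E (m + 1) i) (hmi : m < i) (hm : E m < E (m + 1)) :
    runStart E i = m + 1 := by
  refine le_antisymm (runStart_le h) ?_
  by_contra hlt
  have := decOn_runStart E i m (by simp only [Finset.mem_Ico]; omega)
  omega

lemma runEnd_eq {m i : ℕ} (h : decOn E i m) (him : i ≤ m) (hmn : m ≤ n)
    (hm : E m < E (m + 1)) : runEnd n E i = m := by
  refine le_antisymm ?_ (le_runEnd hmn h)
  by_contra hlt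
  have := decOn_runEnd (E := E) (him.trans hmn) m (by simp only [Finset.mem_Ico]; omega)
  omega

/-! ### Structure of cyclic runs -/

lemma IsCyclicRun.mono {i j i' j' : ℕ} (h : IsCyclicRun n E i j) (hi : i ≤ i') (hij : i' ≤ j')
    (hj : j' ≤ j) : IsCyclicRun n E i' j' := by
  obtain ⟨_, h2, c, hc⟩ := h
  refine ⟨hij, by omega, c, fun t ht => hc t ?_⟩
  simp only [Finset.mem_Ico] at ht ⊢
  omega

lemma add_mod_cases {v c : ℕ} (hv : v ≤ n) (hc : c ≤ n) :
    (v + c ≤ n ∧ (v + c) % (n + 1) = v + c) ∨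
      (n < v + c ∧ (v + c) % (n + 1) + (n + 1) = v + c) := by
  rcases Nat.lt_or_ge n (v + c) with h | h
  · right
    rw [Nat.mod_eq_sub_mod (by omega), Nat.mod_eq_of_lt (by omega)]
    omega
  · left
    rw [Nat.mod_eq_of_lt (by omega)]
    omega

/-- A cyclic run is decreasing, or splits at a single ascent into two decreasing pieces with the
first entry smaller than the last. -/
lemma IsCyclicRun.cases (hE : ∀ t, E t ≤ n) {i j : ℕ} (h : IsCyclicRun n E i j) :
    decOn E i j ∨ ∃ m, i ≤ m ∧ m < j ∧ decOn E i m ∧ decOn E (m + 1) j ∧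
      E m < E (m + 1) ∧ E i < E j := by
  obtain ⟨hij, -, c₀, hc₀⟩ := h
  obtain ⟨c, hcn, hc⟩ : ∃ c, c ≤ n ∧
      ∀ t ∈ Finset.Ico i j, (E (t + 1) + c) % (n + 1) < (E t + c) % (n + 1) := by
    refine ⟨c₀ % (n + 1), Nat.lt_succ_iff.mp (Nat.mod_lt _ (by omega)), fun t ht => ?_⟩
    simpa only [Nat.add_mod_mod] using hc₀ t ht
  -- Entries with `E t + c ≤ n` are not wrapped around by the shift; along the run they all
  -- precede the wrapped ones, because the former have residue at least `c`, the latter below `c`.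
  have hstep : ∀ t, i ≤ t → t < j → n < E t + c → n < E (t + 1) + c ∧ E (t + 1) < E t := by
    intro t h1 h2 h3
    have := hc t (by simp only [Finset.mem_Ico]; omega)
    have := hE t
    have := hE (t + 1)
    rcases add_mod_cases (hE t) hcn with h4 | h4 <;>
      rcases add_mod_cases (hE (t + 1)) hcn with h5 | h5 <;> omega
  have hlow : ∀ t, i ≤ t → t < j → E (t + 1) + c ≤ n → E (t + 1) < E t := by
    intro t h1 h2 h3
    have := hc t (by simp only [Finset.mem_Ico]; omega)
    have := hE t
    rcases add_mod_cases (hE t) hcn with h4 | h4 <;>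
      rcases add_mod_cases (hE (t + 1)) hcn with h5 | h5 <;> omega
  have hup : ∀ s t, i ≤ s → s ≤ t → t ≤ j → n < E s + c → n < E t + c := by
    intro s t his hst
    induction t, hst using Nat.le_induction with
    | base => exact fun _ h => h
    | succ t ht ih => exact fun h1 h2 => (hstep t (by omega) (by omega) (ih (by omega) h2)).1
  by_cases hi : n < E i + c
  · left
    intro t ht
    simp only [Finset.mem_Ico] at ht
    exact (hstep t ht.1 ht.2 (hup i t le_rfl ht.1 ht.2.le hi)).2
  by_cases hj : n < E j + c
  · right
    have hex : ∃ m, i ≤ m ∧ n < E m + c := ⟨j, hij, hj⟩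
    obtain ⟨h1, h2⟩ := Nat.find_spec hex
    have hmin := fun m => Nat.find_min hex (m := m)
    have hle : Nat.find hex ≤ j := Nat.find_min' hex ⟨hij, hj⟩
    obtain ⟨m, hm⟩ : ∃ m, Nat.find hex = m + 1 := by
      refine Nat.exists_eq_succ_of_ne_zero fun h0 => hi ?_
      have : i = Nat.find hex := by omega
      rwa [← this] at h2
    rw [hm] at h1 h2 hmin hle
    have him : i ≤ m := by
      rcases Nat.lt_or_ge m i with h | h
      · have : i = m + 1 := by omega
        subst this
        exact absurd h2 hi
      · exact h
    have hbelow : ∀ t, i ≤ t → t ≤ m → E t + c ≤ n := by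
      intro t h3 h4
      by_contra h5
      exact hmin t (by omega) ⟨h3, by omega⟩
    refine ⟨m, him, by omega, ?_, ?_, ?_, by omega⟩
    · intro t ht
      simp only [Finset.mem_Ico] at ht
      exact hlow t ht.1 (by omega) (hbelow (t + 1) (by omega) (by omega))
    · intro t ht
      simp only [Finset.mem_Ico] at ht
      exact (hstep t (by omega) ht.2 (hup (m + 1) t (by omega) ht.1 ht.2.le h2)).2
    · have := hbelow m him le_rfl
      omega
  · left
    intro t ht
    simp only [Finset.mem_Ico] at ht
    refine hlow t ht.1 ht.2 ?_
    by_contra h1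
    exact hj (hup (t + 1) j (by omega) (by omega) le_rfl (by omega))

lemma isCyclicRun_of_decOn (hE : ∀ t, E t ≤ n) {i j : ℕ} (hij : i ≤ j) (hj : j ≤ n)
    (h : decOn E i j) : IsCyclicRun n E i j := by
  refine ⟨hij, hj, 0, fun t ht => ?_⟩
  have h1 := h t ht
  have h2 := hE t
  have h3 := hE (t + 1)
  rw [Nat.mod_eq_of_lt (by omega), Nat.mod_eq_of_lt (by omega)]
  omega

lemma isCyclicRun_of_split (hE : ∀ t, E t ≤ n) {i m j : ℕ} (him : i ≤ m) (hmj : m < j)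
    (hj : j ≤ n) (h1 : decOn E i m) (h2 : decOn E (m + 1) j) (h3 : E i < E j) :
    IsCyclicRun n E i j := by
  -- This shift sends the last entry of the run to residue `0`.
  refine ⟨by omega, hj, n + 1 - E j, fun t ht => ?_⟩
  simp only [Finset.mem_Ico] at ht
  have hEj := hE j
  have hEt := hE t
  have hEt' := hE (t + 1)
  have hcn : n + 1 - E j ≤ n := by omega
  have ha := add_mod_cases (c := n + 1 - E j) hEt hcn
  have hb := add_mod_cases (c := n + 1 - E j) hEt' hcn
  rcases lt_trichotomy t m with h | h | h
  · have h4 := h1 t (by simp only [Finset.mem_Ico]; omega)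
    have h5 := (h1.mono le_rfl h.le).le ht.1
    omega
  · subst h
    have h5 := h1.le ht.1
    have h6 := h2.le (by omega)
    omega
  · have h4 := h2 t (by simp only [Finset.mem_Ico]; omega)
    have h6 := (h2.mono (show m + 1 ≤ t + 1 by omega) le_rfl).le (by omega)
    omega

/-! ### Schedule numbers and cyclic runs -/

/-- An undecorated entry with positive schedule number ends a cyclic run containing an earlier
undecorated entry. -/
lemma exists_undec_left (hE : ∀ t, E t ≤ n) {l : ℕ} (hln : l ≤ n) (hl : D l = false)
    (hs : schedNum n E D l ≠ 0) : ∃ t, t < l ∧ D t = false ∧ IsCyclicRun n E t l := by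
  unfold schedNum at hs
  rw [if_neg (by simp [hl])] at hs
  by_cases h1 : ((Finset.Icc (runStart E l) (runEnd n E l)).filter
      fun t => D t = false ∧ E l < E t).card = 0
  · rw [h1, zero_add] at hs
    have h0 : runStart E l ≠ 0 := fun h0 => hs (if_pos h0)
    rw [if_neg h0, ← Nat.pos_iff_ne_zero, Finset.card_pos] at hs
    obtain ⟨t, ht⟩ := hs
    simp only [Finset.mem_filter, Finset.mem_Icc] at ht
    obtain ⟨⟨h2, h3⟩, h4, h5⟩ := ht
    have h6 := runStart_le_self E l
    refine ⟨t, by omega, h4, isCyclicRun_of_split hE h3 (by omega) hln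
      ((decOn_runStart E _).mono h2 le_rfl) ?_ h5⟩
    rw [Nat.sub_add_cancel (by omega)]
    exact decOn_runStart E l
  · rw [← Ne, ← Nat.pos_iff_ne_zero, Finset.card_pos] at h1
    obtain ⟨t, ht⟩ := h1
    simp only [Finset.mem_filter, Finset.mem_Icc] at ht
    obtain ⟨⟨h2, h3⟩, h4, h5⟩ := ht
    have htl : t < l := by
      by_contra h
      have := ((decOn_runEnd hln).mono le_rfl h3).le (not_lt.mp h)
      omega
    exact ⟨t, htl, h4, isCyclicRun_of_decOn hE htl.le hln ((decOn_runStart E l).mono h2 le_rfl)⟩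

/-- If an undecorated entry has schedule number at most `1`, the cyclic runs ending at it contain
at most one earlier undecorated entry. -/
lemma undec_left_unique (hE : ∀ t, E t ≤ n) {l : ℕ} (hl : D l = false)
    (hs : schedNum n E D l ≤ 1) {t t' : ℕ} (htl : t < l) (htl' : t' < l)
    (ht : D t = false) (ht' : D t' = false)
    (hr : IsCyclicRun n E t l) (hr' : IsCyclicRun n E t' l) : t = t' := by
  unfold schedNum at hs
  rw [if_neg (by simp [hl])] at hs
  set S₁ := (Finset.Icc (runStart E l) (runEnd n E l)).filter
    fun t => D t = false ∧ E l < E t with hS₁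
  set S₂ := if runStart E l = 0 then ∅ else
    (Finset.Icc (runStart E (runStart E l - 1)) (runStart E l - 1)).filter
      fun t => D t = false ∧ E t < E l with hS₂
  have hcard : (S₁ ∪ S₂).card ≤ 1 := by
    refine (Finset.card_union_le _ _).trans (le_trans (le_of_eq ?_) hs)
    rw [hS₂]
    split_ifs <;> simp
  have hmem : ∀ u, u < l → D u = false → IsCyclicRun n E u l → u ∈ S₁ ∪ S₂ := by
    intro u hul hu hur
    rw [Finset.mem_union]
    rcases hur.cases hE with h | ⟨m, h1, h2, h3, h4, h5, h6⟩
    · left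
      simp only [hS₁, Finset.mem_filter, Finset.mem_Icc]
      exact ⟨⟨runStart_le h, hul.le.trans (self_le_runEnd hur.2.1)⟩, hu, h.lt hul⟩
    · right
      rw [hS₂, runStart_eq h4 h2 h5, if_neg (Nat.succ_ne_zero m)]
      simp only [Finset.mem_filter, Finset.mem_Icc, Nat.add_sub_cancel]
      exact ⟨⟨runStart_le h3, h1⟩, hu, h6⟩
  exact Finset.card_le_one.mp hcard _ (hmem t htl ht hr) _ (hmem t' htl' ht' hr')

/-- If a decorated entry has schedule number at most `1`, the cyclic runs starting at it contain
at most one undecorated entry. -/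
lemma undec_right_unique (hE : ∀ t, E t ≤ n) {k : ℕ} (hk : D k = true)
    (hs : schedNum n E D k ≤ 1) {t t' : ℕ} (htk : k < t) (htk' : k < t')
    (ht : D t = false) (ht' : D t' = false)
    (hr : IsCyclicRun n E k t) (hr' : IsCyclicRun n E k t') : t = t' := by
  unfold schedNum at hs
  rw [if_pos hk] at hs
  set S₁ := (Finset.Icc (runStart E k) (runEnd n E k)).filter
    fun t => D t = false ∧ E t < E k with hS₁
  set S₂ := if runEnd n E k < n then
    (Finset.Icc (runEnd n E k + 1) (runEnd n E (runEnd n E k + 1))).filter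
      fun t => D t = false ∧ E k < E t else ∅ with hS₂
  have hcard : (S₁ ∪ S₂).card ≤ 1 := by
    refine (Finset.card_union_le _ _).trans (le_trans (le_of_eq ?_) hs)
    rw [hS₂]
    split_ifs <;> simp
  have hmem : ∀ u, k < u → D u = false → IsCyclicRun n E k u → u ∈ S₁ ∪ S₂ := by
    intro u hku hu hur
    have hun := hur.2.1
    rw [Finset.mem_union]
    rcases hur.cases hE with h | ⟨m, h1, h2, h3, h4, h5, h6⟩
    · left
      simp only [hS₁, Finset.mem_filter, Finset.mem_Icc]
      exact ⟨⟨(runStart_le_self E k).trans hku.le, le_runEnd hun h⟩, hu, h.lt hku⟩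
    · right
      rw [hS₂, runEnd_eq h3 h1 (by omega) h5, if_pos (by omega)]
      simp only [Finset.mem_filter, Finset.mem_Icc]
      exact ⟨⟨h2, le_runEnd hun h4⟩, hu, h6⟩
  exact Finset.card_le_one.mp hcard _ (hmem t htk ht hr) _ (hmem t' htk' ht' hr')

lemma ent_le {n : ℕ} (σ : Equiv.Perm (Fin n)) (t : ℕ) : ent σ t ≤ n := by
  unfold ent
  split_ifs
  · exact (σ _).isLt
  · exact Nat.zero_le n

lemma LeftMaximalRun.le {k l t : ℕ} (h : LeftMaximalRun n E k l) (ht : IsCyclicRun n E t l) :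
    k ≤ t := by
  rcases h.2 with h0 | h0
  · omega
  · by_contra hlt
    have := h.1.1
    exact h0 (ht.mono (by omega) (by omega) le_rfl)

end QEuler

/-- Let `σ` be a decorated permutation of `{1,…,n}` with all schedule
numbers equal to `1`, and let `σ_k,…,σ_ℓ` be a left-maximal cyclic run with `σ_ℓ`
undecorated.  Then `σ_k` is undecorated and `σ_{k+1},…,σ_{ℓ-1}` are all decorated. -/
theorem leftmax_run_decorations {n : ℕ} (σ : Equiv.Perm (Fin n)) (D : Finset (Fin n))
    (hs : HasSchedOne n (ent σ) (isDec D))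
    (k l : ℕ) (hrun : LeftMaximalRun n (ent σ) k l)
    (hl : isDec D l = false) :
    isDec D k = false ∧ ∀ i, k < i → i < l → isDec D i = true := by
  have hE := ent_le σ
  obtain ⟨hkl, hln, -⟩ := hrun.1
  rcases Nat.eq_zero_or_pos l with rfl | hl0
  · obtain rfl : k = 0 := by omega
    exact ⟨hl, fun i _ hi => absurd hi (by omega)⟩
  have hsl := hs l (Finset.mem_Icc.mpr ⟨hl0, hln⟩)
  obtain ⟨t, htl, ht, htr⟩ := exists_undec_left hE hln hl (by omega)
  have hkt := hrun.le htr
  have hk : isDec D k = false := by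
    by_contra hk
    have hk' : isDec D k = true := by simpa using hk
    have hne : k ≠ t := by
      rintro rfl
      exact hk ht
    have hk0 : 1 ≤ k := by
      by_contra h0
      obtain rfl : k = 0 := by omega
      simp [isDec] at hk'
    have hsk := hs k (Finset.mem_Icc.mpr ⟨hk0, by omega⟩)
    have := undec_right_unique hE hk' hsk.le (by omega) (by omega) ht hl
      (hrun.1.mono le_rfl hkt htl.le) hrun.1
    omega
  refine ⟨hk, fun i hki hil => ?_⟩
  by_contra hi
  have := undec_left_unique hE hl hsl.le (by omega) hil hk (by simpa using hi) hrun.1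
    (hrun.1.mono hki.le hil.le le_rfl)
  omega
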